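/- Let A and B be block upper-triangular subalgebras of M_n(ℂ) and let φ : A → B be a Jordan embedding, i.e. an injective linear map satisfying φ(X²) = φ(X)² for all X ∈ A. Then one of the following holds: (a) A ⊆ B and there exists an invertible T ∈ B such that φ(X) = T X T⁻¹ for all X ∈ A; or (b) A^⊙ ⊆ B and there exists an invertible T ∈ B such that φ(X) = T X^⊙ T⁻¹ for all X ∈ A, where X^⊙ := J Xᵗ J and J is the exchange matrix (J_{ij} = 1 iff i + j = n + 1). -/

import Mathlib

open Matrix

noncomputable section

/-- The block index function: `blockIdx k i` is the index `s` (0-based) of the diagonal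
block containing row/column `i`, for block sizes given by the list `k`. -/
def blockIdx (k : List ℕ) (i : ℕ) : ℕ :=
  ((Finset.range k.length).filter (fun s => (k.take (s + 1)).sum ≤ i)).card

/-- The block upper-triangular algebra `𝒜_{k₁,…,k_r} ⊆ M_n(ℂ)` determined by the
list of block sizes `k`. -/
def blockAlg (n : ℕ) (k : List ℕ) : Set (Matrix (Fin n) (Fin n) ℂ) :=
  { X | ∀ i j : Fin n, blockIdx k (j : ℕ) < blockIdx k (i : ℕ) → X i j = 0 }

/-- A subset of `M_n(ℂ)` is a block upper-triangular subalgebra if it is of the form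
`blockAlg n k` for some list `k` of positive integers summing to `n`. -/
def IsBlockUT (n : ℕ) (𝒜 : Set (Matrix (Fin n) (Fin n) ℂ)) : Prop :=
  ∃ k : List ℕ, (∀ m ∈ k, 0 < m) ∧ k.sum = n ∧ 𝒜 = blockAlg n k

/-- The exchange matrix `J` (ones on the antidiagonal). -/
def exchMat (n : ℕ) : Matrix (Fin n) (Fin n) ℂ :=
  Matrix.of fun i j => if (i : ℕ) + (j : ℕ) + 1 = n then 1 else 0

/-!
The matrices `φ(Eᵢᵢ)` are nonzero pairwise orthogonal idempotents, hence simultaneously conjugate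
to the `Eᵢᵢ`, and one may assume that `φ` fixes every `Eᵢᵢ`. The Peirce relations then force
`φ(Eᵢⱼ)` into the span of `Eᵢⱼ` and `Eⱼᵢ`; since `Eᵢⱼ² = 0` and `φ` is injective, it is a nonzero
multiple of one of them. Every index is comparable with one in the first block, so the same
alternative holds for all `(i, j)`. The surviving coefficients are multiplicative along chains, so
a diagonal conjugation normalises them to `1`, and `φ` is `X ↦ T X T⁻¹` or `X ↦ T Xᵀ T⁻¹`. The
latter is `X ↦ (T J) X^⊙ (T J)⁻¹`, so replace `T` by `T J` in that case.

That `T` lies in the target is a counting argument. If `(i, j)` is strictly below the diagonal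
blocks of the target, then `Tᵢₚ (T⁻¹)_qⱼ = 0` for all `p ≤ q`. A nonzero `Tᵢₚ` below the blocks
would thus make `T⁻¹` vanish on the rectangle `{q | p ≤ q} × {j | j ≤ p}`, whose row and column
counts add up to `n + 1`, and `T⁻¹` would be singular.
-/

theorem exists_linearMap_eqOn {K V W : Type*} [DivisionRing K] [AddCommGroup V] [Module K V]
    [AddCommGroup W] [Module K W] (S : Submodule K V) (f : V → W)
    (hadd : ∀ x ∈ S, ∀ y ∈ S, f (x + y) = f x + f y)
    (hsmul : ∀ (c : K), ∀ x ∈ S, f (c • x) = c • f x) :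
    ∃ g : V →ₗ[K] W, ∀ x ∈ S, g x = f x := by
  let f' : S →ₗ[K] W :=
    { toFun := fun x => f x
      map_add' := fun x y => hadd x x.2 y y.2
      map_smul' := fun c x => hsmul c x x.2 }
  obtain ⟨g, hg⟩ := f'.exists_extend
  exact ⟨g, fun x hx => LinearMap.congr_fun hg ⟨x, hx⟩⟩

theorem mul_eq_zero_of_isIdempotentElem_of_anticommute {R : Type*} [Ring R]
    (h2 : IsUnit (2 : R)) {p q : R} (hp : IsIdempotentElem p) (hpq : p * q + q * p = 0) :
    p * q = 0 := by
  have hqp : q * p = -(p * q) := eq_neg_of_add_eq_zero_right hpq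
  have hneg : p * q = -(p * q) :=
    calc p * q = -(p * (q * p)) := by rw [hqp, mul_neg, neg_neg, ← mul_assoc, hp.eq]
      _ = q * p := by rw [← mul_assoc, ← neg_mul, ← hqp, mul_assoc, hp.eq]
      _ = -(p * q) := hqp
  rw [← h2.mul_right_eq_zero, two_mul]
  exact eq_neg_iff_add_eq_zero.mp hneg

section JordanEmbedding

variable {R A B C : Type*} [CommRing R] [Ring A] [Algebra R A] [Ring B] [Algebra R B]
  [Ring C] [Algebra R C]

/-- A linear map `φ : A → B` restricts to a Jordan embedding of the subalgebra `S`. The map is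
defined on all of `A` so that elements of `S` need no coercion; over a field every linear map on
`S` arises in this way. -/
structure IsJordanEmbeddingOn (φ : A →ₗ[R] B) (S : Subalgebra R A) : Prop where
  injOn : Set.InjOn φ S
  map_sq : ∀ x ∈ S, φ (x * x) = φ x * φ x

namespace IsJordanEmbeddingOn

variable {φ : A →ₗ[R] B} {S : Subalgebra R A} {x y : A}

theorem map_ne_zero (hφ : IsJordanEmbeddingOn φ S) (hx : x ∈ S) (hx0 : x ≠ 0) : φ x ≠ 0 :=
  fun h => hx0 (hφ.injOn hx S.zero_mem (h.trans (map_zero φ).symm))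

theorem map_mul_add_mul (hφ : IsJordanEmbeddingOn φ S) (hx : x ∈ S) (hy : y ∈ S) :
    φ (x * y + y * x) = φ x * φ y + φ y * φ x := by
  calc φ (x * y + y * x) = φ ((x + y) * (x + y)) - φ (x * x) - φ (y * y) := by
        rw [← map_sub, ← map_sub]
        congr 1
        noncomm_ring
    _ = (φ x + φ y) * (φ x + φ y) - φ x * φ x - φ y * φ y := by
        rw [hφ.map_sq _ (S.add_mem hx hy), hφ.map_sq x hx, hφ.map_sq y hy, map_add]
    _ = φ x * φ y + φ y * φ x := by noncomm_ring

theorem isIdempotentElem_map (hφ : IsJordanEmbeddingOn φ S) (hx : x ∈ S)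
    (hidem : IsIdempotentElem x) : IsIdempotentElem (φ x) := by
  rw [IsIdempotentElem, ← hφ.map_sq x hx, hidem.eq]

theorem map_mul_map_eq_zero (h2 : IsUnit (2 : B)) (hφ : IsJordanEmbeddingOn φ S) (hx : x ∈ S)
    (hy : y ∈ S) (hidem : IsIdempotentElem x) (hxy : x * y = 0) (hyx : y * x = 0) :
    φ x * φ y = 0 := by
  refine mul_eq_zero_of_isIdempotentElem_of_anticommute h2 (hφ.isIdempotentElem_map hx hidem) ?_
  rw [← hφ.map_mul_add_mul hx hy, hxy, hyx, add_zero, map_zero]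

theorem comp {ψ : B →ₗ[R] C} (hψ : IsJordanEmbeddingOn ψ ⊤) (hφ : IsJordanEmbeddingOn φ S) :
    IsJordanEmbeddingOn (ψ ∘ₗ φ) S where
  injOn := hψ.injOn.comp hφ.injOn fun _ _ => Algebra.mem_top
  map_sq x hx := by
    rw [LinearMap.comp_apply, LinearMap.comp_apply, hφ.map_sq x hx,
      hψ.map_sq _ Algebra.mem_top]

end IsJordanEmbeddingOn

theorem isJordanEmbeddingOn_mulLeftRight (u : Aˣ) :
    IsJordanEmbeddingOn (LinearMap.mulLeftRight R ((↑u⁻¹ : A), (↑u : A))) ⊤ where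
  injOn := fun x _ y _ h => by simpa using h
  map_sq x _ := by simp [LinearMap.mulLeftRight_apply, mul_assoc]

theorem isJordanEmbeddingOn_transpose {ι : Type*} [Fintype ι] [DecidableEq ι] :
    IsJordanEmbeddingOn (transposeLinearEquiv ι ι R R).toLinearMap ⊤ where
  injOn := (transposeLinearEquiv ι ι R R).injective.injOn
  map_sq X _ := transpose_mul X X

end JordanEmbedding

theorem exists_mulVec_eq_self {ι R : Type*} [Fintype ι] [Semiring R] {P : Matrix ι ι R}
    (hP : IsIdempotentElem P) (hP0 : P ≠ 0) :
    ∃ v ≠ 0, P *ᵥ v = v := by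
  classical
  obtain ⟨j, hj⟩ : ∃ j, P *ᵥ Pi.single j 1 ≠ 0 := by
    contrapose! hP0
    exact ext_of_mulVec_single fun j => by rw [hP0, zero_mulVec]
  exact ⟨_, hj, by rw [mulVec_mulVec, hP.eq]⟩

theorem forall_or_forall_not_of_iff_on_chains {ι α : Type*} [Finite ι] [LinearOrder α]
    {a : ι → α} {r : ι → ι → Prop}
    (hchain : ∀ i j k, i ≠ j → j ≠ k → i ≠ k → a i ≤ a j → a j ≤ a k →
      (r i j ↔ r i k) ∧ (r j k ↔ r i k))
    (hswap : ∀ i j, i ≠ j → a i ≤ a j → a j ≤ a i → r i j → r j i) :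
    (∀ i j, i ≠ j → a i ≤ a j → r i j) ∨ (∀ i j, i ≠ j → a i ≤ a j → ¬ r i j) := by
  rcases isEmpty_or_nonempty ι with hι | hι
  · exact Or.inl fun i => isEmptyElim i
  obtain ⟨z, hz⟩ := Finite.exists_min a
  have hfirst : ∀ j k, z ≠ j → z ≠ k → r z j → r z k := fun j k hj hk hr => by
    rcases eq_or_ne j k with rfl | hjk
    · exact hr
    rcases le_total (a j) (a k) with h | h
    · exact (hchain z j k hj hjk hk (hz j) h).1.mp hr
    · exact (hchain z k j hk hjk.symm hj (hz k) h).1.mpr hr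
  have hall : ∀ i j, i ≠ j → a i ≤ a j → (r i j ↔ ∃ k, z ≠ k ∧ r z k) := fun i j hij hle => by
    suffices ∃ k, z ≠ k ∧ (r i j ↔ r z k) from
      let ⟨k, hk, hiff⟩ := this
      ⟨fun hr => ⟨k, hk, hiff.mp hr⟩, fun ⟨l, hl, hr⟩ => hiff.mpr (hfirst l k hl hk hr)⟩
    rcases eq_or_ne z i with rfl | hi
    · exact ⟨j, hij, Iff.rfl⟩
    rcases eq_or_ne z j with rfl | hj
    · exact ⟨i, hi, hswap i z hij hle (hz i), hswap z i hi (hz i) hle⟩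
    · exact ⟨j, hj, (hchain z i j hi hij hj (hz i) hle).2⟩
  by_cases h : ∃ k, z ≠ k ∧ r z k
  · exact Or.inl fun i j hij hle => (hall i j hij hle).mpr h
  · exact Or.inr fun i j hij hle hr => h ((hall i j hij hle).mp hr)

theorem single_one_ne_zero {ι R : Type*} [DecidableEq ι] [Zero R] [One R] [NeZero (1 : R)]
    (i j : ι) : single i j (1 : R) ≠ 0 :=
  fun h => one_ne_zero (α := R) (by simpa using congr_fun₂ h i j)

theorem linearMap_eq_of_blockTriangular {ι R V α : Type*} [Finite ι] [DecidableEq ι]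
    [CommSemiring R] [AddCommMonoid V] [Module R V] [LinearOrder α] {a : ι → α}
    {f g : Matrix ι ι R →ₗ[R] V} (hfg : ∀ i j, a i ≤ a j → f (single i j 1) = g (single i j 1))
    {X : Matrix ι ι R} (hX : X.BlockTriangular a) : f X = g X := by
  have := Fintype.ofFinite ι
  rw [matrix_eq_sum_single X]
  simp only [map_sum]
  refine Finset.sum_congr rfl fun i _ => Finset.sum_congr rfl fun j _ => ?_
  rcases le_or_gt (a i) (a j) with hij | hji
  · rw [← mul_one (X i j), ← smul_eq_mul, ← smul_single, map_smul, map_smul, hfg i j hij]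
  · rw [hX hji, single_zero, map_zero, map_zero]

section Matrix

variable {ι : Type*} [Fintype ι] [DecidableEq ι]

theorem mulVec_eq_ite_of_orthogonalIdempotents {R : Type*} [Semiring R] {P : ι → Matrix ι ι R}
    (hP : OrthogonalIdempotents P) {v : ι → ι → R} (hv : ∀ i, P i *ᵥ v i = v i) (i j : ι) :
    P i *ᵥ v j = if i = j then v j else 0 := by
  rw [← hv j, mulVec_mulVec, hP.mul_eq]
  split_ifs with hij
  · rw [hij]
  · exact zero_mulVec _

theorem linearIndependent_of_orthogonalIdempotents {R : Type*} [CommRing R] [IsDomain R]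
    {P : ι → Matrix ι ι R} (hP : OrthogonalIdempotents P) {v : ι → ι → R} (hv0 : ∀ i, v i ≠ 0)
    (hv : ∀ i, P i *ᵥ v i = v i) : LinearIndependent R v := by
  refine Fintype.linearIndependent_iff.mpr fun g hg i => ?_
  have hi : P i *ᵥ ∑ j, g j • v j = g i • v i := by
    simp [mulVec_sum, mulVec_smul, mulVec_eq_ite_of_orthogonalIdempotents hP hv]
  rw [hg, mulVec_zero] at hi
  exact (smul_eq_zero.mp hi.symm).resolve_right (hv0 i)

theorem exists_conj_eq_single {K : Type*} [Field K] {P : ι → Matrix ι ι K}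
    (hP : OrthogonalIdempotents P) (hP0 : ∀ i, P i ≠ 0) :
    ∃ S : (Matrix ι ι K)ˣ, ∀ i, S⁻¹.val * P i * S.val = single i i 1 := by
  choose v hv0 hv using fun i => exists_mulVec_eq_self (hP.idem i) (hP0 i)
  obtain ⟨S, hS⟩ : IsUnit (of v)ᵀ :=
    linearIndependent_cols_iff_isUnit.mp (linearIndependent_of_orthogonalIdempotents hP hv0 hv)
  refine ⟨S, fun i => ?_⟩
  rw [mul_assoc, Units.inv_mul_eq_iff_eq_mul, hS]
  refine ext_of_mulVec_single fun j => ?_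
  have hcol : ∀ l, (of v)ᵀ *ᵥ Pi.single l 1 = v l := fun l => by simp
  have hunit : single i i (1 : K) *ᵥ Pi.single j 1 = if i = j then Pi.single j 1 else 0 := by
    ext k
    rcases eq_or_ne i j with rfl | hij
    · simp [single_apply, Pi.single_apply, eq_comm]
    · simp [hij]
  rw [← mulVec_mulVec, ← mulVec_mulVec, hcol, mulVec_eq_ite_of_orthogonalIdempotents hP hv, hunit]
  split_ifs
  · rw [hcol]
  · rw [mulVec_zero]

theorem mul_single_mul_apply {R : Type*} [Semiring R] (M N : Matrix ι ι R) (p q i j : ι) :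
    (M * single p q 1 * N : Matrix ι ι R) i j = M i p * N q j := by
  simp [mul_apply, single_apply, ite_and]

theorem det_eq_zero_of_card_lt {R : Type*} [CommRing R] {M : Matrix ι ι R} {s t : Finset ι}
    (hcard : Fintype.card ι < s.card + t.card) (hM : ∀ i ∈ s, ∀ j ∈ t, M i j = 0) :
    M.det = 0 := by
  rw [det_apply]
  refine Finset.sum_eq_zero fun σ _ => ?_
  obtain ⟨i, hi⟩ : (s ∩ t.image σ).Nonempty := by
    rw [← Finset.card_pos]
    have hle := Finset.card_le_univ (s ∪ t.image σ)
    have heq := Finset.card_union_add_card_inter s (t.image σ)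
    rw [Finset.card_image_of_injective _ σ.injective] at heq
    lia
  obtain ⟨his, hit⟩ := Finset.mem_inter.mp hi
  obtain ⟨j, hj, rfl⟩ := Finset.mem_image.mp hit
  exact smul_eq_zero_of_right _ (Finset.prod_eq_zero (Finset.mem_univ j) (hM _ his j hj))

theorem det_eq_zero_of_forall_le_of_le {R : Type*} [CommRing R] [LinearOrder ι]
    {M : Matrix ι ι R} (p : ι) (hM : ∀ i j, p ≤ i → j ≤ p → M i j = 0) : M.det = 0 := by
  let s : Finset ι := {i | p ≤ i}
  let t : Finset ι := {j | j ≤ p}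
  refine det_eq_zero_of_card_lt (s := s) (t := t) ?_
    fun i hi j hj => hM i j (by simpa [s] using hi) (by simpa [t] using hj)
  have hunion : s ∪ t = Finset.univ := by
    ext i
    simpa [s, t] using le_total p i
  have hinter : (s ∩ t).Nonempty := ⟨p, by simp [s, t]⟩
  rw [← Finset.card_union_add_card_inter, hunion, Finset.card_univ]
  exact Nat.lt_add_of_pos_right hinter.card_pos

theorem eq_single_add_single_of_peirce {R : Type*} [Ring R] {M : Matrix ι ι R} {i j : ι}
    (hij : i ≠ j) (hi : M = single i i 1 * M + M * single i i 1)
    (hj : M = single j j 1 * M + M * single j j 1) :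
    M = single i j (M i j) + single j i (M j i) := by
  have hentry : ∀ x k l, (single x x 1 * M + M * single x x 1 : Matrix ι ι R) k l =
      (if k = x then M k l else 0) + (if l = x then M k l else 0) := fun x k l => by
    rw [← diagonal_single, Matrix.add_apply, diagonal_mul, mul_diagonal]
    simp [Pi.single_apply]
  ext k l
  have hikl := congr_fun₂ hi k l
  have hjkl := congr_fun₂ hj k l
  rw [hentry] at hikl hjkl
  rw [Matrix.add_apply, single_apply, single_apply]
  clear hi hj hentry
  grind

theorem exists_conj_submatrix_eq_conj {R : Type*} [Semiring R] (e : Equiv.Perm ι)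
    (T : (Matrix ι ι R)ˣ) :
    ∃ U : (Matrix ι ι R)ˣ, ∀ X, U.val * X.submatrix e e * U⁻¹.val = T.val * X * T⁻¹.val := by
  let U : (Matrix ι ι R)ˣ :=
    { val := T.val.submatrix id e
      inv := T⁻¹.val.submatrix e id
      val_inv := by rw [submatrix_mul_equiv, T.mul_inv, submatrix_id_id]
      inv_val := by
        rw [← submatrix_mul _ _ _ _ _ Function.bijective_id, T.inv_mul, submatrix_one_equiv] }
  refine ⟨U, fun X => ?_⟩
  change T.val.submatrix id e * X.submatrix e e * T⁻¹.val.submatrix e id = _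
  rw [submatrix_mul_equiv, submatrix_mul_equiv, submatrix_id_id]

section Conjugation

variable {R β : Type*} [CommRing R] [IsDomain R] [LinearOrder ι] [LinearOrder β] {b : ι → β}

theorem blockTriangular_of_forall_conj_single (hb : Monotone b) (T : (Matrix ι ι R)ˣ)
    (hT : ∀ p q, p ≤ q → (T.val * single p q 1 * T⁻¹.val).BlockTriangular b) :
    T.val.BlockTriangular b := by
  have hentry : ∀ p q i j, p ≤ q → b j < b i → T.val i p * T⁻¹.val q j = 0 :=
    fun p q i j hpq hji => by
      have := hT p q hpq hji
      rwa [mul_single_mul_apply] at this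
  intro i p hpi
  by_contra hne
  have hdet : T⁻¹.val.det = 0 :=
    det_eq_zero_of_forall_le_of_le p fun q j hpq hjp =>
      (mul_eq_zero.mp (hentry p q i j hpq ((hb hjp).trans_lt hpi))).resolve_left hne
  exact ((isUnit_iff_isUnit_det _).mp T⁻¹.isUnit).ne_zero hdet

theorem subset_and_mem_of_conj_mem_blockTriangularSubalgebra (hb : Monotone b)
    {𝒞 : Set (Matrix ι ι R)} (h𝒞 : ∀ p q, p ≤ q → single p q 1 ∈ 𝒞) (T : (Matrix ι ι R)ˣ)
    (hT : ∀ X ∈ 𝒞, T.val * X * T⁻¹.val ∈ blockTriangularSubalgebra R R b) :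
    𝒞 ⊆ blockTriangularSubalgebra R R b ∧ T.val ∈ blockTriangularSubalgebra R R b ∧
      T⁻¹.val ∈ blockTriangularSubalgebra R R b := by
  have hmem : T.val ∈ blockTriangularSubalgebra R R b :=
    blockTriangular_of_forall_conj_single hb T fun p q hpq => hT _ (h𝒞 p q hpq)
  have hinv : T⁻¹.val ∈ blockTriangularSubalgebra R R b := by
    have := T.invertible
    rw [coe_units_inv]
    exact blockTriangular_inv_of_blockTriangular hmem
  refine ⟨fun X hX => ?_, hmem, hinv⟩
  simpa [mul_assoc] using mul_mem (mul_mem hinv (hT X hX)) hmem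

end Conjugation

end Matrix

namespace IsJordanEmbeddingOn

section DiagonalFixing

variable {ι K α : Type*} [Fintype ι] [DecidableEq ι] [Field K] [LinearOrder α] {a : ι → α}
  {φ : Matrix ι ι K →ₗ[K] Matrix ι ι K}
  (hφ : IsJordanEmbeddingOn φ (blockTriangularSubalgebra K K a))
  (hdiag : ∀ i, φ (single i i 1) = single i i 1)
include hφ hdiag

theorem map_single_eq_add {i j : ι} (hij : i ≠ j) (hle : a i ≤ a j) :
    φ (single i j 1) = single i j (φ (single i j 1) i j) + single j i (φ (single i j 1) j i) := by
  have hmem := blockTriangular_single hle (1 : K)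
  refine eq_single_add_single_of_peirce hij ?_ ?_
  · have h := hφ.map_mul_add_mul (blockTriangular_single le_rfl 1) hmem (x := single i i 1)
    simpa [hdiag, hij.symm] using h
  · have h := hφ.map_mul_add_mul (blockTriangular_single le_rfl 1) hmem (x := single j j 1)
    simpa [hdiag, hij.symm] using h

theorem map_single_apply_mul_apply_swap {i j : ι} (hij : i ≠ j) (hle : a i ≤ a j) :
    φ (single i j 1) i j * φ (single i j 1) j i = 0 := by
  have hsq := hφ.map_sq _ (blockTriangular_single hle (1 : K))
  rw [hφ.map_single_eq_add hdiag hij hle] at hsq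
  simpa [hij, hij.symm, mul_add, add_mul] using (congr_fun₂ hsq i i).symm

theorem map_single_apply_ne_zero_or {i j : ι} (hij : i ≠ j) (hle : a i ≤ a j) :
    φ (single i j 1) i j ≠ 0 ∨ φ (single i j 1) j i ≠ 0 := by
  have hne : φ (single i j 1) ≠ 0 :=
    hφ.map_ne_zero (blockTriangular_single hle 1) (single_one_ne_zero i j)
  contrapose! hne
  rw [hφ.map_single_eq_add hdiag hij hle, hne.1, hne.2, single_zero, single_zero, add_zero]

theorem map_single_apply_chain {i j k : ι} (hij : i ≠ j) (hjk : j ≠ k) (hik : i ≠ k)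
    (h₁ : a i ≤ a j) (h₂ : a j ≤ a k) :
    φ (single i k 1) i k = φ (single i j 1) i j * φ (single j k 1) j k := by
  have h := hφ.map_mul_add_mul (blockTriangular_single h₁ (1 : K)) (blockTriangular_single h₂ 1)
  rw [hφ.map_single_eq_add hdiag hij h₁, hφ.map_single_eq_add hdiag hjk h₂] at h
  simpa [hij, hij.symm, hjk, hjk.symm, hik, hik.symm, mul_add, add_mul] using congr_fun₂ h i k

theorem map_single_apply_add_swap {i j : ι} (hij : i ≠ j) (h₁ : a i ≤ a j) (h₂ : a j ≤ a i) :
    φ (single i j 1) i j * φ (single j i 1) j i +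
      φ (single j i 1) i j * φ (single i j 1) j i = 1 := by
  have h := hφ.map_mul_add_mul (blockTriangular_single h₁ (1 : K)) (blockTriangular_single h₂ 1)
  rw [hφ.map_single_eq_add hdiag hij h₁, hφ.map_single_eq_add hdiag hij.symm h₂] at h
  simpa [hij, hij.symm, mul_add, add_mul, hdiag] using (congr_fun₂ h i i).symm

theorem transpose_map_single_apply_chain {i j k : ι} (hij : i ≠ j) (hjk : j ≠ k) (hik : i ≠ k)
    (h₁ : a i ≤ a j) (h₂ : a j ≤ a k) :
    φ (single i k 1) k i = φ (single i j 1) j i * φ (single j k 1) k j :=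
  map_single_apply_chain (isJordanEmbeddingOn_transpose.comp hφ)
    (fun i => by simp [hdiag]) hij hjk hik h₁ h₂

theorem map_single_apply_ne_zero_iff {i j : ι} (hij : i ≠ j) (hle : a i ≤ a j) :
    φ (single i j 1) i j ≠ 0 ↔ φ (single i j 1) j i = 0 := by
  have hmul := hφ.map_single_apply_mul_apply_swap hdiag hij hle
  have hor := hφ.map_single_apply_ne_zero_or hdiag hij hle
  grind

theorem map_single_eq_single_or :
    (∀ i j, a i ≤ a j → φ (single i j 1) = single i j (φ (single i j 1) i j)) ∨
      (∀ i j, a i ≤ a j → φ (single i j 1) = single j i (φ (single i j 1) j i)) := by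
  have hchain : ∀ i j k, i ≠ j → j ≠ k → i ≠ k → a i ≤ a j → a j ≤ a k →
      (φ (single i j 1) i j ≠ 0 ↔ φ (single i k 1) i k ≠ 0) ∧
        (φ (single j k 1) j k ≠ 0 ↔ φ (single i k 1) i k ≠ 0) :=
    fun i j k hij hjk hik h₁ h₂ => by
      have hα := hφ.map_single_apply_chain hdiag hij hjk hik h₁ h₂
      have hβ := hφ.transpose_map_single_apply_chain hdiag hij hjk hik h₁ h₂
      have hij' := hφ.map_single_apply_ne_zero_iff hdiag hij h₁
      have hjk' := hφ.map_single_apply_ne_zero_iff hdiag hjk h₂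
      have hik' := hφ.map_single_apply_ne_zero_iff hdiag hik (h₁.trans h₂)
      grind
  have hswap : ∀ i j, i ≠ j → a i ≤ a j → a j ≤ a i →
      φ (single i j 1) i j ≠ 0 → φ (single j i 1) j i ≠ 0 := fun i j hij h₁ h₂ hr => by
    have hadd := hφ.map_single_apply_add_swap hdiag hij h₁ h₂
    rw [(hφ.map_single_apply_ne_zero_iff hdiag hij h₁).mp hr, mul_zero, add_zero] at hadd
    exact right_ne_zero_of_mul_eq_one hadd
  refine (forall_or_forall_not_of_iff_on_chains hchain hswap).imp (fun h i j hle => ?_)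
    fun h i j hle => ?_
  all_goals rcases eq_or_ne i j with rfl | hij
  · simp [hdiag]
  · have hzero := (hφ.map_single_apply_ne_zero_iff hdiag hij hle).mp (h i j hij hle)
    simpa only [hzero, single_zero, add_zero] using hφ.map_single_eq_add hdiag hij hle
  · simp [hdiag]
  · have hzero := not_not.mp (h i j hij hle)
    simpa only [hzero, single_zero, zero_add] using hφ.map_single_eq_add hdiag hij hle

theorem map_single_apply_trans
    (hsingle : ∀ i j, a i ≤ a j → φ (single i j 1) = single i j (φ (single i j 1) i j))
    {i j k : ι} (h₁ : a i ≤ a j) (h₂ : a j ≤ a k) :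
    φ (single i k 1) i k = φ (single i j 1) i j * φ (single j k 1) j k := by
  rcases eq_or_ne i j with rfl | hij
  · simp [hdiag]
  rcases eq_or_ne j k with rfl | hjk
  · simp [hdiag]
  rcases eq_or_ne i k with rfl | hik
  · have hadd := hφ.map_single_apply_add_swap hdiag hij h₁ h₂
    have hzero : φ (single i j 1) j i = 0 := by
      rw [hsingle i j h₁, single_apply_of_ne _ _ _ _ _ fun h => hij h.1]
    rw [hzero, mul_zero, add_zero] at hadd
    rw [hadd, hdiag, single_apply_same]
  · exact hφ.map_single_apply_chain hdiag hij hjk hik h₁ h₂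

theorem exists_conj_of_map_single_eq_single
    (hsingle : ∀ i j, a i ≤ a j → φ (single i j 1) = single i j (φ (single i j 1) i j)) :
    ∃ D : (Matrix ι ι K)ˣ, ∀ X, X.BlockTriangular a → φ X = D.val * X * D⁻¹.val := by
  rcases isEmpty_or_nonempty ι with hι | hι
  · exact ⟨1, fun X _ => Subsingleton.elim _ _⟩
  obtain ⟨z, hz⟩ := Finite.exists_min a
  let d : ι → K := fun i => φ (single z i 1) z i
  have hd : ∀ i, d i ≠ 0 := fun i h => by
    refine hφ.map_ne_zero (blockTriangular_single (hz i) 1) (single_one_ne_zero z i) ?_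
    rw [hsingle z i (hz i), show φ (single z i 1) z i = 0 from h, single_zero]
  let D : (Matrix ι ι K)ˣ :=
    { val := diagonal d⁻¹
      inv := diagonal d
      val_inv := by simp [diagonal_mul_diagonal, hd]
      inv_val := by simp [diagonal_mul_diagonal, hd] }
  refine ⟨D, fun X hX => linearMap_eq_of_blockTriangular
    (g := LinearMap.mulLeftRight K (D.val, D⁻¹.val)) (fun i j hle => ?_) hX⟩
  have hmul : d j = d i * φ (single i j 1) i j :=
    hφ.map_single_apply_trans hdiag hsingle (hz i) hle
  have hconj : diagonal d⁻¹ * single i j 1 * diagonal d = single i j ((d i)⁻¹ * d j) := by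
    ext k l
    rw [mul_diagonal, diagonal_mul]
    grind [Pi.inv_apply]
  rw [hsingle i j hle, LinearMap.mulLeftRight_apply]
  exact (hconj.trans (by rw [hmul, inv_mul_cancel_left₀ (hd i)])).symm

theorem exists_conj_or_exists_conj_transpose_of_map_single_self :
    ∃ T : (Matrix ι ι K)ˣ,
      (∀ X, X.BlockTriangular a → φ X = T.val * X * T⁻¹.val) ∨
        (∀ X, X.BlockTriangular a → φ X = T.val * Xᵀ * T⁻¹.val) := by
  rcases hφ.map_single_eq_single_or hdiag with hsingle | hsingle
  · obtain ⟨D, hD⟩ := hφ.exists_conj_of_map_single_eq_single hdiag hsingle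
    exact ⟨D, Or.inl hD⟩
  · obtain ⟨D, hD⟩ := exists_conj_of_map_single_eq_single
      (isJordanEmbeddingOn_transpose.comp hφ) (fun i => by simp [hdiag])
      fun i j hle => (congrArg transpose (hsingle i j hle)).trans (transpose_single _ _ _)
    have hT : ∃ T : (Matrix ι ι K)ˣ, T.val = D⁻¹.valᵀ ∧ T⁻¹.val = D.valᵀ :=
      ⟨⟨D⁻¹.valᵀ, D.valᵀ, by simp [← transpose_mul], by simp [← transpose_mul]⟩, rfl, rfl⟩
    obtain ⟨T, hval, hinv⟩ := hT
    refine ⟨T, Or.inr fun X hX => ?_⟩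
    calc φ X = (D.val * X * D⁻¹.val)ᵀ := by rw [← hD X hX]; rfl
      _ = T.val * Xᵀ * T⁻¹.val := by rw [hval, hinv, transpose_mul, transpose_mul, mul_assoc]

end DiagonalFixing

section Structure

variable {ι K α : Type*} [Fintype ι] [DecidableEq ι] [Field K] [NeZero (2 : K)] [LinearOrder α]
  {a : ι → α} {φ : Matrix ι ι K →ₗ[K] Matrix ι ι K}

theorem orthogonalIdempotents_map_single
    (hφ : IsJordanEmbeddingOn φ (blockTriangularSubalgebra K K a)) :
    OrthogonalIdempotents fun i => φ (single i i 1) where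
  idem i := hφ.isIdempotentElem_map (blockTriangular_single le_rfl 1) (by simp [IsIdempotentElem])
  ortho i j hij := by
    have h2 : IsUnit (2 : Matrix ι ι K) := by
      simpa only [map_ofNat] using
        (IsUnit.mk0 (2 : K) two_ne_zero).map (algebraMap K (Matrix ι ι K))
    exact hφ.map_mul_map_eq_zero h2 (blockTriangular_single le_rfl 1)
      (blockTriangular_single le_rfl 1) (by simp [IsIdempotentElem]) (by simp [hij])
      (by simp [hij.symm])

theorem exists_conj_or_exists_conj_transpose
    (hφ : IsJordanEmbeddingOn φ (blockTriangularSubalgebra K K a)) :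
    ∃ T : (Matrix ι ι K)ˣ,
      (∀ X, X.BlockTriangular a → φ X = T.val * X * T⁻¹.val) ∨
        (∀ X, X.BlockTriangular a → φ X = T.val * Xᵀ * T⁻¹.val) := by
  obtain ⟨S, hS⟩ := exists_conj_eq_single hφ.orthogonalIdempotents_map_single fun i =>
    hφ.map_ne_zero (blockTriangular_single le_rfl 1) (single_one_ne_zero i i)
  obtain ⟨T, hT⟩ := exists_conj_or_exists_conj_transpose_of_map_single_self
    ((isJordanEmbeddingOn_mulLeftRight S).comp hφ) hS
  have hlift : ∀ X Y : Matrix ι ι K, S⁻¹.val * φ X * S.val = T.val * Y * T⁻¹.val →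
      φ X = (S * T).val * Y * (S * T)⁻¹.val := fun X Y h => by
    rw [mul_assoc, Units.inv_mul_eq_iff_eq_mul, ← Units.eq_mul_inv_iff_mul_eq] at h
    simp only [h, _root_.mul_inv_rev, Units.val_mul, mul_assoc]
  exact ⟨S * T, hT.imp (fun h X hX => hlift X X (h X hX)) fun h X hX => hlift X Xᵀ (h X hX)⟩

end Structure

end IsJordanEmbeddingOn

theorem jordan_embedding_between_blockAlgs_general {n : ℕ} {K α β : Type*} [Field K]
    [NeZero (2 : K)] [LinearOrder α] [LinearOrder β] {a : Fin n → α} {b : Fin n → β}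
    (ha : Monotone a) (hb : Monotone b)
    (φ : Matrix (Fin n) (Fin n) K → Matrix (Fin n) (Fin n) K)
    (hmaps : ∀ X ∈ blockTriangularSubalgebra K K a, φ X ∈ blockTriangularSubalgebra K K b)
    (hadd : ∀ X ∈ blockTriangularSubalgebra K K a, ∀ Y ∈ blockTriangularSubalgebra K K a,
      φ (X + Y) = φ X + φ Y)
    (hsmul : ∀ (c : K), ∀ X ∈ blockTriangularSubalgebra K K a, φ (c • X) = c • φ X)
    (hinj : Set.InjOn φ (blockTriangularSubalgebra K K a))
    (hjordan : ∀ X ∈ blockTriangularSubalgebra K K a, φ (X * X) = φ X * φ X) :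
    ((blockTriangularSubalgebra K K a : Set (Matrix (Fin n) (Fin n) K)) ⊆
        blockTriangularSubalgebra K K b ∧
      ∃ T ∈ blockTriangularSubalgebra K K b, IsUnit T.det ∧
        T⁻¹ ∈ blockTriangularSubalgebra K K b ∧
        ∀ X ∈ blockTriangularSubalgebra K K a, φ X = T * X * T⁻¹) ∨
    ((fun X => Xᵀ.submatrix Fin.rev Fin.rev) ''
        (blockTriangularSubalgebra K K a : Set (Matrix (Fin n) (Fin n) K)) ⊆
          blockTriangularSubalgebra K K b ∧
      ∃ T ∈ blockTriangularSubalgebra K K b, IsUnit T.det ∧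
        T⁻¹ ∈ blockTriangularSubalgebra K K b ∧
        ∀ X ∈ blockTriangularSubalgebra K K a,
          φ X = T * Xᵀ.submatrix Fin.rev Fin.rev * T⁻¹) := by
  obtain ⟨ψ, hψ⟩ :=
    exists_linearMap_eqOn (blockTriangularSubalgebra K K a).toSubmodule φ hadd hsmul
  have hJordan : IsJordanEmbeddingOn ψ (blockTriangularSubalgebra K K a) :=
    { injOn := hinj.congr fun X hX => (hψ X hX).symm
      map_sq := fun X hX => by rw [hψ X hX, hψ _ (Subalgebra.mul_mem _ hX hX), hjordan X hX] }
  obtain ⟨T, hT | hT⟩ := hJordan.exists_conj_or_exists_conj_transpose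
  · have hφT : ∀ X ∈ blockTriangularSubalgebra K K a, φ X = T.val * X * T⁻¹.val :=
      fun X hX => (hψ X hX).symm.trans (hT X hX)
    obtain ⟨hsub, hmem, hinv⟩ := subset_and_mem_of_conj_mem_blockTriangularSubalgebra hb
      (fun p q hpq => blockTriangular_single (ha hpq) 1) T fun X hX => hφT X hX ▸ hmaps X hX
    simp only [coe_units_inv] at hφT hinv
    exact Or.inl ⟨hsub, T, hmem, (isUnit_iff_isUnit_det _).mp T.isUnit, hinv, hφT⟩
  · obtain ⟨U, hU⟩ := exists_conj_submatrix_eq_conj Fin.revPerm T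
    have hφU : ∀ X ∈ blockTriangularSubalgebra K K a,
        φ X = U.val * Xᵀ.submatrix Fin.rev Fin.rev * U⁻¹.val :=
      fun X hX => (hψ X hX).symm.trans ((hT X hX).trans (hU Xᵀ).symm)
    have hrev : ∀ p q : Fin n, p ≤ q → single p q 1 ∈ (fun X => Xᵀ.submatrix Fin.rev Fin.rev) ''
        (blockTriangularSubalgebra K K a : Set (Matrix (Fin n) (Fin n) K)) := fun p q hpq =>
      ⟨single q.rev p.rev 1, blockTriangular_single (ha (Fin.rev_le_rev.mpr hpq)) 1, by
        ext i j
        simp [single_apply]⟩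
    obtain ⟨hsub, hmem, hinv⟩ :=
      subset_and_mem_of_conj_mem_blockTriangularSubalgebra hb hrev U <| by
        rintro _ ⟨X, hX, rfl⟩
        exact hφU X hX ▸ hmaps X hX
    simp only [coe_units_inv] at hφU hinv
    exact Or.inr ⟨hsub, U, hmem, (isUnit_iff_isUnit_det _).mp U.isUnit, hinv, hφU⟩

theorem blockIdx_mono (k : List ℕ) : Monotone (blockIdx k) := fun _ _ hij =>
  Finset.card_le_card (Finset.monotone_filter_right _ fun _ _ hs => hs.trans hij)

theorem IsBlockUT.exists_eq_blockTriangularSubalgebra {n : ℕ} {𝒜 : Set (Matrix (Fin n) (Fin n) ℂ)}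
    (h𝒜 : IsBlockUT n 𝒜) :
    ∃ a : Fin n → ℕ, Monotone a ∧ 𝒜 = blockTriangularSubalgebra ℂ ℂ a := by
  obtain ⟨k, -, -, rfl⟩ := h𝒜
  exact ⟨fun i => blockIdx k i, fun i j hij => blockIdx_mono k hij, rfl⟩

theorem exchMat_mul_mul_exchMat {n : ℕ} (X : Matrix (Fin n) (Fin n) ℂ) :
    exchMat n * X * exchMat n = X.submatrix Fin.rev Fin.rev := by
  have hJ : ∀ i j, exchMat n i j = if i = j.rev then 1 else 0 := fun i j => by
    simp only [exchMat, of_apply, Fin.ext_iff, Fin.val_rev]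
    grind
  have hleft : exchMat n * X = X.submatrix Fin.rev id := by
    ext i j
    simp [mul_apply, hJ, ← Fin.rev_eq_iff]
  have hright : ∀ Y, Y * exchMat n = Y.submatrix id Fin.rev := fun Y => by
    ext i j
    simp [mul_apply, hJ]
  rw [hleft, hright, submatrix_submatrix, Function.comp_id, Function.id_comp]

theorem jordan_embedding_between_blockAlgs {n : ℕ} (𝒜 ℬ : Set (Matrix (Fin n) (Fin n) ℂ))
    (h𝒜 : IsBlockUT n 𝒜) (hℬ : IsBlockUT n ℬ)
    (φ : Matrix (Fin n) (Fin n) ℂ → Matrix (Fin n) (Fin n) ℂ)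
    (hmaps : ∀ X ∈ 𝒜, φ X ∈ ℬ)
    (hadd : ∀ X ∈ 𝒜, ∀ Y ∈ 𝒜, φ (X + Y) = φ X + φ Y)
    (hsmul : ∀ (c : ℂ), ∀ X ∈ 𝒜, φ (c • X) = c • φ X)
    (hinj : Set.InjOn φ 𝒜)
    (hjordan : ∀ X ∈ 𝒜, φ (X * X) = φ X * φ X) :
    (𝒜 ⊆ ℬ ∧ ∃ T ∈ ℬ, IsUnit T.det ∧ T⁻¹ ∈ ℬ ∧
      ∀ X ∈ 𝒜, φ X = T * X * T⁻¹) ∨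
    ((fun X : Matrix (Fin n) (Fin n) ℂ => exchMat n * Xᵀ * exchMat n) '' 𝒜 ⊆ ℬ ∧
      ∃ T ∈ ℬ, IsUnit T.det ∧ T⁻¹ ∈ ℬ ∧
        ∀ X ∈ 𝒜, φ X = T * (exchMat n * Xᵀ * exchMat n) * T⁻¹) := by
  obtain ⟨a, ha, rfl⟩ := h𝒜.exists_eq_blockTriangularSubalgebra
  obtain ⟨b, hb, rfl⟩ := hℬ.exists_eq_blockTriangularSubalgebra
  simpa only [exchMat_mul_mul_exchMat, SetLike.mem_coe] using
    jordan_embedding_between_blockAlgs_general ha hb φ hmaps hadd hsmul hinj hjordan
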